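/- With crossing parameter η = π/3 and any parameter λ, the vectors χ(x) and χ̄(x) satisfy, for all x: Ř(2x)·χ(x) = g(x)·r(2x)·χ(−x) and Ř(2x)·χ̄(x) = ḡ(x)·r(2x)·χ̄(−x). -/

import Mathlib

noncomputable section

open Complex
open scoped BigOperators

/-- Jacobi theta function `ϑ₁(z|τ)` with nome `p = e^{iπτ}` (Whittaker–Watson convention). -/
def th1 (z τ : ℂ) : ℂ :=
  -Complex.I * ∑' n : ℤ, (-1 : ℂ) ^ n *
    Complex.exp ((Real.pi : ℂ) * Complex.I * τ * ((n : ℂ) + 1/2) ^ 2 + (2 * (n : ℂ) + 1) * Complex.I * z)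

/-- Jacobi theta function `ϑ₂(z|τ)`. -/
def th2 (z τ : ℂ) : ℂ :=
  ∑' n : ℤ,
    Complex.exp ((Real.pi : ℂ) * Complex.I * τ * ((n : ℂ) + 1/2) ^ 2 + (2 * (n : ℂ) + 1) * Complex.I * z)

/-- Jacobi theta function `ϑ₃(z|τ)`. -/
def th3 (z τ : ℂ) : ℂ :=
  ∑' n : ℤ, Complex.exp ((Real.pi : ℂ) * Complex.I * τ * (n : ℂ) ^ 2 + 2 * (n : ℂ) * Complex.I * z)

/-- Jacobi theta function `ϑ₄(z|τ)`. -/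
def th4 (z τ : ℂ) : ℂ :=
  ∑' n : ℤ, (-1 : ℂ) ^ n *
    Complex.exp ((Real.pi : ℂ) * Complex.I * τ * (n : ℂ) ^ 2 + 2 * (n : ℂ) * Complex.I * z)

/-- The crossing parameter `η = π/3`. -/
def ηc : ℂ := (Real.pi : ℂ) / 3

/-- The elliptic nome `p = e^{iπτ}`. -/
def pnome (τ : ℂ) : ℂ := Complex.exp ((Real.pi : ℂ) * Complex.I * τ)

/-- `ζ = (ϑ₁(η,p²)/ϑ₄(η,p²))²`. -/
def zet (τ : ℂ) : ℂ := (th1 ηc (2 * τ) / th4 ηc (2 * τ)) ^ 2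

/-- The nome `p` is real with `0 < p < 1`. -/
def preal (τ : ℂ) : Prop := (pnome τ).im = 0 ∧ 0 < (pnome τ).re ∧ (pnome τ).re < 1

/-- A tuple given by a list of prescribed entries, padded by zeros. -/
def padded {n : ℕ} (l : List ℂ) : Fin n → ℂ := fun j => l.getD (j : ℕ) 0

/-- Extension of a tuple by a list of prescribed further entries (padded by zeros). -/
def extL {m n : ℕ} (w : Fin m → ℂ) (l : List ℂ) : Fin n → ℂ :=
  fun j => if h : (j : ℕ) < m then w ⟨j, h⟩ else l.getD ((j : ℕ) - m) 0

/-- First `k` entries of a `2k`-tuple. -/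
def firstHalf {k : ℕ} (x : Fin (2 * k) → ℂ) : Fin k → ℂ :=
  fun i => x ⟨(i : ℕ), by have := i.2; omega⟩

/-- Last `k` entries of a `2k`-tuple. -/
def secondHalf {k : ℕ} (x : Fin (2 * k) → ℂ) : Fin k → ℂ :=
  fun i => x ⟨k + (i : ℕ), by have := i.2; omega⟩

/-- `𝕙(x,y) = ϑ₁(x−y+η)ϑ₁(x−y−η)ϑ₁(x+y+η)ϑ₁(x+y−η)`. -/
def hh (τ x y : ℂ) : ℂ :=
  th1 (x - y + ηc) τ * th1 (x - y - ηc) τ * th1 (x + y + ηc) τ * th1 (x + y - ηc) τ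

/-- `𝔻(x₁,…,x_k) = ∏_{i<j} ϑ₁(x_j−x_i)ϑ₁(x_j+x_i)`. -/
def vdTheta (τ : ℂ) {k : ℕ} (y : Fin k → ℂ) : ℂ :=
  ∏ i : Fin k, ∏ j : Fin k, if i < j then th1 (y j - y i) τ * th1 (y j + y i) τ else 1

/-- The elliptic Tsuchiya determinant `ℍ_{2k}(x₁,…,x_k; x_{k+1},…,x_{2k})`. -/
def tsuchiya (τ : ℂ) (k : ℕ) (x : Fin (2 * k) → ℂ) : ℂ :=
  (∏ i : Fin k, ∏ j : Fin k, hh τ (firstHalf x i) (secondHalf x j))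
    / (vdTheta τ (firstHalf x) * vdTheta τ (secondHalf x))
    * Matrix.det (Matrix.of fun i j : Fin k => (hh τ (firstHalf x i) (secondHalf x j))⁻¹)

/-- The expression defining the elliptic Tsuchiya determinant is well defined:
the Vandermonde-type denominators and the entries `𝕙(x_i,x_{j+k})` are nonzero. -/
def tsuDefined (τ : ℂ) (k : ℕ) (x : Fin (2 * k) → ℂ) : Prop :=
  (∀ i j : Fin k, i ≠ j →
    th1 (firstHalf x j - firstHalf x i) τ ≠ 0 ∧ th1 (firstHalf x j + firstHalf x i) τ ≠ 0) ∧
  (∀ i j : Fin k, i ≠ j →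
    th1 (secondHalf x j - secondHalf x i) τ ≠ 0 ∧ th1 (secondHalf x j + secondHalf x i) τ ≠ 0) ∧
  (∀ i j : Fin k, hh τ (firstHalf x i) (secondHalf x j) ≠ 0)

/-- `h(w,w') = 1 − (3+ζ²)ww' + (1−ζ²)ww'(w+w')`. -/
def hpol (ζ w w' : ℂ) : ℂ := 1 - (3 + ζ ^ 2) * w * w' + (1 - ζ ^ 2) * w * w' * (w + w')

/-- Vandermonde product `Δ(w₁,…,w_k) = ∏_{i<j}(w_j − w_i)`. -/
def vdm {k : ℕ} (y : Fin k → ℂ) : ℂ :=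
  ∏ i : Fin k, ∏ j : Fin k, if i < j then y j - y i else 1

/-- The determinant-ratio expression defining the polynomial `H_{2k}`. -/
def Hratio (ζ : ℂ) (k : ℕ) (w : Fin (2 * k) → ℂ) : ℂ :=
  (∏ i : Fin k, ∏ j : Fin k, hpol ζ (firstHalf w i) (secondHalf w j))
    / (vdm (firstHalf w) * vdm (secondHalf w))
    * Matrix.det (Matrix.of fun i j : Fin k => (hpol ζ (firstHalf w i) (secondHalf w j))⁻¹)

/-- The expression `Hratio` is well defined at `w`. -/
def HratioDefined (ζ : ℂ) (k : ℕ) (w : Fin (2 * k) → ℂ) : Prop :=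
  (∀ i j : Fin k, i ≠ j → firstHalf w i ≠ firstHalf w j) ∧
  (∀ i j : Fin k, i ≠ j → secondHalf w i ≠ secondHalf w j) ∧
  (∀ i j : Fin k, hpol ζ (firstHalf w i) (secondHalf w j) ≠ 0)

/-- `H` is the family of Rosengren–Zinn-Justin polynomials `H_{2k}` for parameter `ζ`:
for each `k`, `H k` is a polynomial function of the `2k` variables agreeing with the
determinant-ratio formula wherever the latter is defined, and `H 0 = 1`. -/
def IsHFamily (ζ : ℂ) (H : (k : ℕ) → (Fin (2 * k) → ℂ) → ℂ) : Prop :=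
  (∀ w, H 0 w = 1) ∧
  (∀ k : ℕ, ∃ P : MvPolynomial (Fin (2 * k)) ℂ, ∀ w, H k w = MvPolynomial.eval w P) ∧
  (∀ (k : ℕ) (w : Fin (2 * k) → ℂ), HratioDefined ζ k w → H k w = Hratio ζ k w)

/-- Vertex weight `a(u)`. -/
def av (τ u : ℂ) : ℂ := th4 (2*ηc) (2*τ) * th1 (u + 2*ηc) (2*τ) * th4 u (2*τ)
/-- Vertex weight `b(u)`. -/
def bv (τ u : ℂ) : ℂ := th4 (2*ηc) (2*τ) * th4 (u + 2*ηc) (2*τ) * th1 u (2*τ)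
/-- Vertex weight `c(u)`. -/
def cv (τ u : ℂ) : ℂ := th1 (2*ηc) (2*τ) * th4 (u + 2*ηc) (2*τ) * th4 u (2*τ)
/-- Vertex weight `d(u)`. -/
def dv (τ u : ℂ) : ℂ := th1 (2*ηc) (2*τ) * th1 (u + 2*ηc) (2*τ) * th1 u (2*τ)
/-- `r(u) = a(u) + b(u)`. -/
def rv (τ u : ℂ) : ℂ := av τ u + bv τ u

/-- Entries of the `R`-matrix of the eight-vertex model, in the basis `{↑↑,↑↓,↓↑,↓↓}`
identified with `Fin 2 × Fin 2` (`↑ = 0`, `↓ = 1`). -/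
def Rent (τ u : ℂ) (p q : Fin 2 × Fin 2) : ℂ :=
  if p = q then (if p.1 = p.2 then av τ u else bv τ u)
  else if q = (p.2, p.1) then cv τ u
  else if p.1 = p.2 ∧ q.1 = q.2 then dv τ u
  else 0

/-- Entries of `Ř(u) = 𝒫 R(u)`. -/
def Rcheckent (τ u : ℂ) (p q : Fin 2 × Fin 2) : ℂ := Rent τ u (p.2, p.1) q

/-- The boundary vector `χ(x) ∈ ℂ²⊗ℂ²`. -/
def chiV (τ lam x : ℂ) : Fin 2 × Fin 2 → ℂ := fun p =>
  if p = ((0 : Fin 2), (1 : Fin 2)) then th1 (x + lam) (2*τ) * th4 (x - lam - 2*ηc) (2*τ)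
  else if p = ((1 : Fin 2), (0 : Fin 2)) then th1 (x - lam - 2*ηc) (2*τ) * th4 (x + lam) (2*τ)
  else 0

/-- The boundary vector `χ̄(x) ∈ ℂ²⊗ℂ²`. -/
def chibarV (τ lam x : ℂ) : Fin 2 × Fin 2 → ℂ := fun p =>
  if p = ((0 : Fin 2), (0 : Fin 2)) then th1 (x + lam) (2*τ) * th1 (x - lam - 2*ηc) (2*τ)
  else if p = ((1 : Fin 2), (1 : Fin 2)) then th4 (x - lam - 2*ηc) (2*τ) * th4 (x + lam) (2*τ)
  else 0

/-- A family `Ψ_n(u₁,…,u_{2n+1}) ∈ (ℂ²)^{⊗(2n+1)}`, represented by its components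
with respect to spin configurations `α : Fin (2n+1) → Fin 2` (`↑ = 0`, `↓ = 1`). -/
abbrev PsiFam := (n : ℕ) → (Fin (2 * n + 1) → ℂ) → (Fin (2 * n + 1) → Fin 2) → ℂ

/-- The action of `Ř(u)` on tensor factors `i`, `j` of `(ℂ²)^{⊗L}`. -/
def applyRc (τ u : ℂ) {L : ℕ} (i j : Fin L) (ψ : (Fin L → Fin 2) → ℂ) :
    (Fin L → Fin 2) → ℂ := fun α =>
  ∑ s : Fin 2, ∑ t : Fin 2,
    Rcheckent τ u (α i, α j) (s, t) * ψ (Function.update (Function.update α i s) j t)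

/-- Spin flip. -/
def flipS : Fin 2 → Fin 2 := fun s => if s = 0 then 1 else 0

/-- Components of the singlet `s = ↑↓ − ↓↑`. -/
def singletC : Fin 2 → Fin 2 → ℂ := fun s t =>
  if s = 0 ∧ t = 1 then 1 else if s = 1 ∧ t = 0 then -1 else 0

/-- Delete the entries at positions `i`, `i+1` from a tuple. -/
def delTwo {α : Type*} {n : ℕ} (i : ℕ) (u : Fin (2 * (n + 1) + 1) → α) : Fin (2 * n + 1) → α :=
  fun j => if _h : (j : ℕ) < i then u ⟨j, by have := j.2; omega⟩
           else u ⟨(j : ℕ) + 2, by have := j.2; omega⟩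

/-- The components of `Ψ_n` are entire functions of each `u_i`. -/
def PsiEntire (Ψ : PsiFam) : Prop :=
  ∀ (n : ℕ) (u : Fin (2*n+1) → ℂ) (i : Fin (2*n+1)) (α : Fin (2*n+1) → Fin 2),
    Differentiable ℂ fun z => Ψ n (Function.update u i z) α

/-- (P1): the exchange relations. -/
def PsiP1 (τ : ℂ) (Ψ : PsiFam) : Prop :=
  ∀ (n : ℕ) (u : Fin (2*n+1) → ℂ) (i j : Fin (2*n+1)), (j : ℕ) = (i : ℕ) + 1 →
    applyRc τ (u j - u i) i j (Ψ n u)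
      = fun α => rv τ (u j - u i) * Ψ n (fun l => u (Equiv.swap i j l)) α

/-- (P2): local spin flips. -/
def PsiP2 (τ : ℂ) (Ψ : PsiFam) : Prop :=
  ∀ (n : ℕ) (u : Fin (2*n+1) → ℂ) (i : Fin (2*n+1)) (α : Fin (2*n+1) → Fin 2),
    Ψ n u (Function.update α i (flipS (α i)))
      = (-(pnome τ)) ^ n * Complex.exp (-Complex.I * ∑ j, (u j - u i))
        * Ψ n (Function.update u i (u i + Real.pi * τ)) α

/-- (P3): quasi-periodicity of `Ψ_n` in each `u_i`. -/
def PsiP3 (τ : ℂ) (Ψ : PsiFam) : Prop :=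
  ∀ (n : ℕ) (u : Fin (2*n+1) → ℂ) (i : Fin (2*n+1)),
    (Ψ n (Function.update u i (u i + Real.pi))
      = fun α => (∏ j ∈ Finset.univ.erase i, (if α j = 0 then (1:ℂ) else -1)) * Ψ n u α) ∧
    (Ψ n (Function.update u i (u i + 2 * Real.pi * τ))
      = fun α => (pnome τ ^ (4*n))⁻¹ *
          Complex.exp (-2 * Complex.I * ∑ j, (u i - u j)) * Ψ n u α)

/-- (P4): the wheel condition. -/
def PsiP4 (Ψ : PsiFam) : Prop :=
  ∀ (n : ℕ) (u : Fin (2*n+1) → ℂ),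
    (∃ i j k : Fin (2*n+1), i < j ∧ j < k ∧ u j = u i + 2*ηc ∧ u k = u i + 4*ηc) →
    Ψ n u = 0

/-- (P5): the reduction relations. -/
def PsiP5 (τ : ℂ) (Ψ : PsiFam) : Prop :=
  ∀ (n : ℕ) (u : Fin (2*(n+1)+1) → ℂ) (i : ℕ) (hi : i + 1 < 2*(n+1)+1),
    u ⟨i+1, hi⟩ = u ⟨i, by omega⟩ + 2*ηc →
    Ψ (n+1) u = fun α =>
      (∏ j ∈ (Finset.univ.erase (⟨i, by omega⟩ : Fin (2*(n+1)+1))).erase ⟨i+1, hi⟩,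
          th1 (u ⟨i, by omega⟩ - u j - 2*ηc) τ)
        * singletC (α ⟨i, by omega⟩) (α ⟨i+1, hi⟩)
        * Ψ n (delTwo i u) (delTwo i α)

/-- (P6): `Ψ₀ = ↑ + ↓`. -/
def PsiP6 (Ψ : PsiFam) : Prop := ∀ u α, Ψ 0 u α = 1

/-- The inhomogeneity parameters `(x₁,−x₁,…,x_n,−x_n,0)`. -/
def interleave {n : ℕ} (x : Fin n → ℂ) : Fin (2*n+1) → ℂ := fun j =>
  if h : (j : ℕ) < 2*n then
    (if (j : ℕ) % 2 = 0 then x ⟨(j:ℕ)/2, by omega⟩ else -x ⟨(j:ℕ)/2, by omega⟩)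
  else 0

/-- Components of `χ(x)`. -/
def chiC (τ lam x : ℂ) (s t : Fin 2) : ℂ :=
  if s = 0 ∧ t = 1 then th1 (x + lam) (2*τ) * th4 (x - lam - 2*ηc) (2*τ)
  else if s = 1 ∧ t = 0 then th1 (x - lam - 2*ηc) (2*τ) * th4 (x + lam) (2*τ)
  else 0

/-- Components of `χ̄(x)`. -/
def chibarC (τ lam x : ℂ) (s t : Fin 2) : ℂ :=
  if s = 0 ∧ t = 0 then th1 (x + lam) (2*τ) * th1 (x - lam - 2*ηc) (2*τ)
  else if s = 1 ∧ t = 1 then th4 (x - lam - 2*ηc) (2*τ) * th4 (x + lam) (2*τ)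
  else 0

/-- The scalar product `Z_n(x₁,…,x_n) = ⟨ξ_n(x₁,…,x_n), Ψ_n(x₁,−x₁,…,x_n,−x_n,0)⟩`. -/
def Zfun (τ lam : ℂ) (Ψ : PsiFam) (n : ℕ) (x : Fin n → ℂ) : ℂ :=
  ∑ α : Fin (2*n+1) → Fin 2,
    (∏ m : Fin n, chiC τ lam (x m)
        (α ⟨2*(m:ℕ), by have := m.2; omega⟩) (α ⟨2*(m:ℕ)+1, by have := m.2; omega⟩))
      * (if α ⟨2*n, by omega⟩ = 0 then (1:ℂ) else 0)
      * Ψ n (interleave x) α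

/-- The scalar product `Z̄_n^±(x₁,…,x_n)`, with `ε = ±1`. -/
def Zbarfun (τ lam ε : ℂ) (Ψ : PsiFam) (n : ℕ) (x : Fin n → ℂ) : ℂ :=
  ∑ α : Fin (2*n+1) → Fin 2,
    (∏ m : Fin n, chibarC τ lam (x m)
        (α ⟨2*(m:ℕ), by have := m.2; omega⟩) (α ⟨2*(m:ℕ)+1, by have := m.2; omega⟩))
      * (if α ⟨2*n, by omega⟩ = 0 then (1:ℂ) else ε)
      * Ψ n (interleave x) α

/-- The normalisation constant `𝒩_n`. -/
def Ncoef (τ : ℂ) (n : ℕ) : ℂ :=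
  (-1 : ℂ) ^ ((n+1)/2) * (th1 ηc τ ^ (n^2))⁻¹ * (th4 0 (2*τ) / th4 ηc (2*τ)) ^ (n*(n+1)/2)

/-- The vector `ψ_n = 𝒩_n Ψ_n(0,…,0)`. -/
def psiH (τ : ℂ) (Ψ : PsiFam) (n : ℕ) (α : Fin (2*n+1) → Fin 2) : ℂ :=
  Ncoef τ n * Ψ n (fun _ => 0) α

/-- The scalar product `S_n(μ) = ((⟨↑↓| + μ⟨↓↑|)^{⊗n} ⊗ ⟨↑|) ψ_n`. -/
def Sfun (τ : ℂ) (Ψ : PsiFam) (n : ℕ) (μ : ℂ) : ℂ :=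
  ∑ α : Fin (2*n+1) → Fin 2,
    (∏ m : Fin n,
      (if α ⟨2*(m:ℕ), by have := m.2; omega⟩ = 0 ∧ α ⟨2*(m:ℕ)+1, by have := m.2; omega⟩ = 1
        then (1:ℂ)
       else if α ⟨2*(m:ℕ), by have := m.2; omega⟩ = 1 ∧ α ⟨2*(m:ℕ)+1, by have := m.2; omega⟩ = 0
        then μ
       else 0))
      * (if α ⟨2*n, by omega⟩ = 0 then (1:ℂ) else 0) * psiH τ Ψ n α

/-- The scalar product `S̄_n^±(ν) = ((⟨↑↑| + ν⟨↓↓|)^{⊗n} ⊗ (⟨↑| ± ⟨↓|)) ψ_n`, with `ε = ±1`. -/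
def Sbarfun (τ ε : ℂ) (Ψ : PsiFam) (n : ℕ) (ν : ℂ) : ℂ :=
  ∑ α : Fin (2*n+1) → Fin 2,
    (∏ m : Fin n,
      (if α ⟨2*(m:ℕ), by have := m.2; omega⟩ = 0 ∧ α ⟨2*(m:ℕ)+1, by have := m.2; omega⟩ = 0
        then (1:ℂ)
       else if α ⟨2*(m:ℕ), by have := m.2; omega⟩ = 1 ∧ α ⟨2*(m:ℕ)+1, by have := m.2; omega⟩ = 1
        then ν
       else 0))
      * (if α ⟨2*n, by omega⟩ = 0 then (1:ℂ) else ε) * psiH τ Ψ n α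

/-- The alternating spin configuration `↑↓↑↓⋯↑`. -/
def altConf {L : ℕ} : Fin L → Fin 2 := fun j => if (j : ℕ) % 2 = 0 then 0 else 1

/-- The fully polarised spin configuration `↓⋯↓`. -/
def downConf {L : ℕ} : Fin L → Fin 2 := fun _ => 1

/-- The spin configuration `↑⋯↑↓` with a single `↓` at the last site. -/
def lastDownConf {n : ℕ} : Fin (2*n+1) → Fin 2 := fun j => if (j : ℕ) = 2*n then 1 else 0

/-- `J₂ = −1/2`. -/
def J2c : ℂ := -(1/2)
/-- `J₃ = 1/(1+ζ)`. -/
def J3c (ζ : ℂ) : ℂ := 1/(1+ζ)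
/-- `J₄ = 1/(1−ζ)`. -/
def J4c (ζ : ℂ) : ℂ := 1/(1-ζ)
/-- `μ̄ = (μ−1)²/((ζ²−1)μ)`. -/
def mubar (ζ μ : ℂ) : ℂ := (μ - 1)^2 / ((ζ^2 - 1)*μ)
/-- `ν̄ = (ν−ζ)(νζ−1)/((ζ²−1)ν)`. -/
def nubar (ζ ν : ℂ) : ℂ := (ν - ζ)*(ν*ζ - 1) / ((ζ^2 - 1)*ν)

/-- The elliptic function `w(x)`. -/
def wfun (τ x : ℂ) : ℂ :=
  th4 ηc (2*τ) / th4 0 (2*τ) * th1 x τ ^ 2 / (th1 (x - ηc) τ * th1 (x + ηc) τ)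

/-- `β₂ = η + π/2`. -/
def β2c : ℂ := ηc + (Real.pi : ℂ)/2
/-- `β₃ = η + π/2 + πτ/2`. -/
def β3c (τ : ℂ) : ℂ := ηc + (Real.pi : ℂ)/2 + (Real.pi : ℂ)*τ/2
/-- `β₄ = η + πτ/2`. -/
def β4c (τ : ℂ) : ℂ := ηc + (Real.pi : ℂ)*τ/2

/-- `f` is an (even) theta function of degree `m`, nome `p = e^{iπτ}` and norm `0`
with respect to each of its variables. -/
def ThetaLike (τ : ℂ) (m : ℕ) {n : ℕ} (X : (Fin n → ℂ) → ℂ) : Prop :=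
  ∀ (x : Fin n → ℂ) (i : Fin n),
    Differentiable ℂ (fun z => X (Function.update x i z)) ∧
    (∀ z, X (Function.update x i (z + Real.pi)) = X (Function.update x i z)) ∧
    (∀ z, X (Function.update x i (z + Real.pi * τ))
        = ((-(pnome τ)) ^ m)⁻¹ * Complex.exp (-2 * Complex.I * ((m : ℂ) * z))
            * X (Function.update x i z)) ∧
    (∀ z, X (Function.update x i (-z)) = X (Function.update x i z))

lemma neg_one_zpow_sub_eq_add (j k : ℤ) : (-1 : ℂ) ^ (j - k) = (-1 : ℂ) ^ (j + k) := by
  rw [zpow_sub₀ (by norm_num), zpow_add₀ (by norm_num), div_eq_mul_inv, ← inv_zpow]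
  norm_num

lemma neg_one_zpow_mul_self (j : ℤ) : (-1 : ℂ) ^ j * (-1 : ℂ) ^ j = 1 := by
  rw [← mul_zpow]
  norm_num

lemma summable_int_gaussian (z : ℂ) {τ : ℂ} (hτ : 0 < τ.im) :
    Summable fun n : ℤ =>
      Complex.exp ((Real.pi : ℂ) * Complex.I * τ * (n : ℂ) ^ 2 + 2 * (n : ℂ) * Complex.I * z) := by
  refine ((summable_jacobiTheta₂_term_iff (z / Real.pi) τ).2 hτ).congr fun n => ?_
  have hpi : (Real.pi : ℂ) ≠ 0 := by exact_mod_cast Real.pi_ne_zero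
  rw [jacobiTheta₂_term]
  congr 1
  field_simp
  ring

lemma summable_halfInt_gaussian (z : ℂ) {τ : ℂ} (hτ : 0 < τ.im) :
    Summable fun n : ℤ =>
      Complex.exp ((Real.pi : ℂ) * Complex.I * τ * ((n : ℂ) + 1/2) ^ 2
        + (2 * (n : ℂ) + 1) * Complex.I * z) := by
  refine ((summable_int_gaussian (z + Real.pi * τ / 2) hτ).mul_left
    (Complex.exp ((Real.pi : ℂ) * Complex.I * τ / 4 + Complex.I * z))).congr fun n => ?_
  rw [← Complex.exp_add]
  congr 1
  ring

lemma Summable.neg_one_zpow_mul {f : ℤ → ℂ} (hf : Summable f) :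
    Summable fun n : ℤ => (-1 : ℂ) ^ n * f n := by
  rw [← summable_norm_iff] at hf ⊢
  simpa [norm_zpow] using hf

/-- A sum over `ℤ × ℤ` splits according to the parity of the sum of the two indices. -/
lemma Summable.tsum_parity_split {f : ℤ × ℤ → ℂ} (hf : Summable f) (d : ℤ) :
    ∑' p, f p = ∑' p : ℤ × ℤ, f (p.1 + p.2, p.1 - p.2)
      + ∑' p : ℤ × ℤ, f (p.1 + p.2 + d, p.1 - p.2 + d - 1) := by
  let φ : (ℤ × ℤ) ⊕ (ℤ × ℤ) → ℤ × ℤ :=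
    Sum.elim (fun p => (p.1 + p.2, p.1 - p.2)) (fun p => (p.1 + p.2 + d, p.1 - p.2 + d - 1))
  have hφ : Function.Bijective φ := by
    constructor
    · rintro (⟨a, b⟩ | ⟨a, b⟩) (⟨a', b'⟩ | ⟨a', b'⟩) h <;>
        simp only [φ, Sum.elim_inl, Sum.elim_inr, Prod.mk.injEq] at h
      · obtain ⟨rfl, rfl⟩ : a = a' ∧ b = b' := by omega
        rfl
      · omega
      · omega
      · obtain ⟨rfl, rfl⟩ : a = a' ∧ b = b' := by omega
        rfl
    · rintro ⟨m, n⟩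
      rcases Int.even_or_odd (m + n) with ⟨r, hr⟩ | ⟨r, hr⟩
      · exact ⟨Sum.inl (r, m - r), by simp only [φ, Sum.elim_inl, Prod.mk.injEq]; omega⟩
      · exact ⟨Sum.inr (r + 1 - d, m - r - 1), by
          simp only [φ, Sum.elim_inr, Prod.mk.injEq]; omega⟩
  have hs : Summable (f ∘ φ) := hf.comp_injective hφ.injective
  rw [← (Equiv.ofBijective φ hφ).tsum_eq f]
  exact Summable.tsum_sum (f := f ∘ φ) (hs.comp_injective Sum.inl_injective)
    (hs.comp_injective Sum.inr_injective)

/-- The product of two series over `ℤ`, rearranged by the parity of the sum of the indices. -/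
lemma tsum_mul_tsum_parity {f g u v u' v' : ℤ → ℂ} (d : ℤ)
    (hf : Summable f) (hg : Summable g) (hu : Summable u) (hv : Summable v)
    (hu' : Summable u') (hv' : Summable v')
    (heven : ∀ j k, f (j + k) * g (j - k) = u j * v k)
    (hodd : ∀ j k, f (j + k + d) * g (j - k + d - 1) = u' j * v' k) :
    (∑' n, f n) * ∑' n, g n = (∑' n, u n) * (∑' n, v n) + (∑' n, u' n) * ∑' n, v' n := by
  rw [tsum_mul_tsum_of_summable_norm hf.norm hg.norm,
    tsum_mul_tsum_of_summable_norm hu.norm hv.norm,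
    tsum_mul_tsum_of_summable_norm hu'.norm hv'.norm,
    (summable_mul_of_summable_norm hf.norm hg.norm).tsum_parity_split d]
  simp only [heven, hodd]

lemma th1_mul_th1 (x y : ℂ) {τ : ℂ} (hτ : 0 < τ.im) :
    th1 (x + y) τ * th1 (x - y) τ
      = th3 (2 * x) (2 * τ) * th2 (2 * y) (2 * τ) - th2 (2 * x) (2 * τ) * th3 (2 * y) (2 * τ) := by
  have hτ' : 0 < (2 * τ).im := by simpa using hτ
  have key := tsum_mul_tsum_parity 0
    (summable_halfInt_gaussian (x + y) hτ).neg_one_zpow_mul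
    (summable_halfInt_gaussian (x - y) hτ).neg_one_zpow_mul
    (summable_halfInt_gaussian (2 * x) hτ') (summable_int_gaussian (2 * y) hτ')
    (summable_int_gaussian (2 * x) hτ').neg (summable_halfInt_gaussian (2 * y) hτ')
    (fun j k => by
      rw [neg_one_zpow_sub_eq_add, mul_mul_mul_comm, neg_one_zpow_mul_self, one_mul,
        ← Complex.exp_add, ← Complex.exp_add]
      congr 1
      push_cast
      ring)
    (fun j k => by
      have h : j - k + 0 - 1 = j - (k + 1) := by ring
      have h' : (-1 : ℂ) ^ (j + (k + 1)) = -(-1 : ℂ) ^ (j + k) := by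
        rw [← add_assoc, zpow_add_one₀ (by norm_num)]
        ring
      rw [h, add_zero, neg_one_zpow_sub_eq_add, h', mul_mul_mul_comm, mul_neg,
        neg_one_zpow_mul_self, neg_one_mul, neg_mul, ← Complex.exp_add, ← Complex.exp_add]
      congr 2
      push_cast
      ring)
  rw [tsum_neg] at key
  simp only [th1, th2, th3]
  linear_combination (-1 : ℂ) * key + Complex.I_sq * (∑' n : ℤ, (-1 : ℂ) ^ n *
    Complex.exp ((Real.pi : ℂ) * Complex.I * τ * ((n : ℂ) + 1/2) ^ 2
      + (2 * (n : ℂ) + 1) * Complex.I * (x + y))) * (∑' n : ℤ, (-1 : ℂ) ^ n *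
    Complex.exp ((Real.pi : ℂ) * Complex.I * τ * ((n : ℂ) + 1/2) ^ 2
      + (2 * (n : ℂ) + 1) * Complex.I * (x - y)))

lemma th4_mul_th4 (x y : ℂ) {τ : ℂ} (hτ : 0 < τ.im) :
    th4 (x + y) τ * th4 (x - y) τ
      = th3 (2 * x) (2 * τ) * th3 (2 * y) (2 * τ) - th2 (2 * x) (2 * τ) * th2 (2 * y) (2 * τ) := by
  have hτ' : 0 < (2 * τ).im := by simpa using hτ
  have key := tsum_mul_tsum_parity 1
    (summable_int_gaussian (x + y) hτ).neg_one_zpow_mul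
    (summable_int_gaussian (x - y) hτ).neg_one_zpow_mul
    (summable_int_gaussian (2 * x) hτ') (summable_int_gaussian (2 * y) hτ')
    (summable_halfInt_gaussian (2 * x) hτ').neg (summable_halfInt_gaussian (2 * y) hτ')
    (fun j k => by
      rw [neg_one_zpow_sub_eq_add, mul_mul_mul_comm, neg_one_zpow_mul_self, one_mul,
        ← Complex.exp_add, ← Complex.exp_add]
      congr 1
      push_cast
      ring)
    (fun j k => by
      have h : j - k + 1 - 1 = j - k := by ring
      rw [h, neg_one_zpow_sub_eq_add, zpow_add_one₀ (by norm_num), mul_mul_mul_comm,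
        mul_neg_one, neg_mul,
        neg_one_zpow_mul_self, neg_one_mul, neg_mul, ← Complex.exp_add, ← Complex.exp_add]
      congr 2
      push_cast
      ring)
  rw [tsum_neg] at key
  simp only [th2, th3, th4]
  linear_combination key

lemma th1_mul_th2 (x y : ℂ) {τ : ℂ} (hτ : 0 < τ.im) :
    th1 x τ * th2 y τ
      = th1 (x + y) (2 * τ) * th4 (x - y) (2 * τ) + th4 (x + y) (2 * τ) * th1 (x - y) (2 * τ) := by
  have hτ' : 0 < (2 * τ).im := by simpa using hτ
  have key := tsum_mul_tsum_parity 0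
    (summable_halfInt_gaussian x hτ).neg_one_zpow_mul (summable_halfInt_gaussian y hτ)
    (summable_halfInt_gaussian (x + y) hτ').neg_one_zpow_mul
    (summable_int_gaussian (x - y) hτ').neg_one_zpow_mul
    (summable_int_gaussian (x + y) hτ').neg_one_zpow_mul
    (summable_halfInt_gaussian (x - y) hτ').neg_one_zpow_mul
    (fun j k => by
      rw [mul_mul_mul_comm, ← zpow_add₀ (by norm_num), mul_assoc,
        ← Complex.exp_add, ← Complex.exp_add]
      congr 2
      push_cast
      ring)
    (fun j k => by
      rw [add_zero, mul_mul_mul_comm, ← zpow_add₀ (by norm_num), mul_assoc,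
        ← Complex.exp_add, ← Complex.exp_add]
      congr 2
      push_cast
      ring)
  simp only [th1, th2, th4]
  linear_combination -Complex.I * key

lemma th2_neg (z τ : ℂ) : th2 (-z) τ = th2 z τ := by
  rw [th2, th2, ← (Equiv.subLeft (-1 : ℤ)).tsum_eq]
  refine tsum_congr fun n => ?_
  simp only [Equiv.subLeft_apply]
  congr 1
  push_cast
  ring

lemma th4_neg (z τ : ℂ) : th4 (-z) τ = th4 z τ := by
  rw [th4, th4, ← (Equiv.neg ℤ).tsum_eq]
  refine tsum_congr fun n => ?_
  simp only [Equiv.neg_apply]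
  rw [← zero_sub n, neg_one_zpow_sub_eq_add, zero_add]
  congr 2
  push_cast
  ring

lemma th1_neg (z τ : ℂ) : th1 (-z) τ = -th1 z τ := by
  rw [th1, th1, ← (Equiv.subLeft (-1 : ℤ)).tsum_eq, ← mul_neg, ← tsum_neg]
  congr 1
  refine tsum_congr fun n => ?_
  simp only [Equiv.subLeft_apply]
  rw [neg_one_zpow_sub_eq_add, zpow_add₀ (by norm_num), zpow_neg_one, inv_neg, inv_one,
    neg_one_mul, neg_mul]
  congr 3
  push_cast
  ring

lemma th1_pi_sub (z τ : ℂ) : th1 (Real.pi - z) τ = th1 z τ := by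
  rw [← neg_neg (th1 z τ), ← th1_neg, th1, th1, ← mul_neg, ← tsum_neg]
  congr 1
  refine tsum_congr fun n => ?_
  rw [← mul_neg]
  congr 1
  rw [show (Real.pi : ℂ) * Complex.I * τ * ((n : ℂ) + 1/2) ^ 2
      + (2 * (n : ℂ) + 1) * Complex.I * (Real.pi - z)
    = (Real.pi : ℂ) * Complex.I * τ * ((n : ℂ) + 1/2) ^ 2
      + (2 * (n : ℂ) + 1) * Complex.I * (-z) + (n * (2 * Real.pi * Complex.I)
      + Real.pi * Complex.I) by ring, Complex.exp_add _ (_ + _),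
    Complex.exp_add ((n : ℂ) * _), Complex.exp_int_mul_two_pi_mul_I, Complex.exp_pi_mul_I]
  ring

lemma three_term_mixed (x l s : ℂ) {τ : ℂ} (hτ : 0 < τ.im) :
    th1 s τ * th4 (2 * x) τ * (th1 (x + l) τ * th4 (x - l - s) τ)
      + th4 s τ * th1 (2 * x) τ * (th1 (x - l - s) τ * th4 (x + l) τ)
      = -(th4 0 τ * th1 (s - 2 * x) τ * (th1 (x - l) τ * th4 (x + l + s) τ)) := by
  set P := (x + l + s) / 2 with hP
  set Q := (s - x - l) / 2 with hQ
  set R := (3 * x - l - s) / 2 with hR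
  have e1 : s = P + Q := by rw [hP, hQ]; ring
  have e2 : x + l = P - Q := by rw [hP, hQ]; ring
  have e3 : 2 * x = R + P := by rw [hP, hR]; ring
  have e4 : x - l - s = R - P := by rw [hP, hR]; ring
  have e5 : s - 2 * x = Q - R := by rw [hQ, hR]; ring
  have e6 : x - l = Q + R := by rw [hQ, hR]; ring
  have e7 : x + l + s = P + P := by rw [hP]; ring
  rw [e5, e7, e4, e6, e3, e2, e1, ← sub_self P]
  have a1 := th1_mul_th1 P Q hτ
  have a2 := th4_mul_th4 R P hτ
  have a3 := th4_mul_th4 P Q hτ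
  have a4 := th1_mul_th1 R P hτ
  have a5 := th4_mul_th4 P P hτ
  have a6 := th1_mul_th1 Q R hτ
  calc _ = (th1 (P + Q) τ * th1 (P - Q) τ) * (th4 (R + P) τ * th4 (R - P) τ)
        + (th4 (P + Q) τ * th4 (P - Q) τ) * (th1 (R + P) τ * th1 (R - P) τ) := by ring
    _ = -((th4 (P + P) τ * th4 (P - P) τ) * (th1 (Q + R) τ * th1 (Q - R) τ)) := by
      rw [a1, a2, a3, a4, a5, a6]
      ring
    _ = _ := by ring

lemma three_term_th1 (x l s : ℂ) {τ : ℂ} (hτ : 0 < τ.im) :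
    th4 s τ * th4 (2 * x) τ * (th1 (x + l) τ * th1 (x - l - s) τ)
      + th1 s τ * th1 (2 * x) τ * (th4 (x - l - s) τ * th4 (x + l) τ)
      = th4 0 τ * th4 (s - 2 * x) τ * (th1 (x - l) τ * th1 (x + l + s) τ) := by
  set A := x + s / 2 with hA
  set B := x - s / 2 with hB
  set C := l + s / 2 with hC
  have e1 : s = A - B := by rw [hA, hB]; ring
  have e2 : 2 * x = A + B := by rw [hA, hB]; ring
  have e3 : x + l = B + C := by rw [hB, hC]; ring
  have e4 : x - l - s = B - C := by rw [hB, hC]; ring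
  have e5 : s - 2 * x = -(B + B) := by rw [hB]; ring
  have e6 : x - l = A - C := by rw [hA, hC]; ring
  have e7 : x + l + s = A + C := by rw [hA, hC]; ring
  rw [e5, e7, e4, e6, e3, e2, e1, ← sub_self B, th4_neg]
  calc _ = (th4 (A + B) τ * th4 (A - B) τ) * (th1 (B + C) τ * th1 (B - C) τ)
        + (th1 (A + B) τ * th1 (A - B) τ) * (th4 (B + C) τ * th4 (B - C) τ) := by ring
    _ = (th4 (B + B) τ * th4 (B - B) τ) * (th1 (A + C) τ * th1 (A - C) τ) := by
      simp only [th1_mul_th1 _ _ hτ, th4_mul_th4 _ _ hτ]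
      ring
    _ = _ := by ring

lemma three_term_th4 (x l s : ℂ) {τ : ℂ} (hτ : 0 < τ.im) :
    th1 s τ * th1 (2 * x) τ * (th1 (x + l) τ * th1 (x - l - s) τ)
      + th4 s τ * th4 (2 * x) τ * (th4 (x - l - s) τ * th4 (x + l) τ)
      = th4 0 τ * th4 (s - 2 * x) τ * (th4 (x + l + s) τ * th4 (x - l) τ) := by
  set A := x + s / 2 with hA
  set B := x - s / 2 with hB
  set C := l + s / 2 with hC
  have e1 : s = A - B := by rw [hA, hB]; ring
  have e2 : 2 * x = A + B := by rw [hA, hB]; ring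
  have e3 : x + l = B + C := by rw [hB, hC]; ring
  have e4 : x - l - s = B - C := by rw [hB, hC]; ring
  have e5 : s - 2 * x = -(B + B) := by rw [hB]; ring
  have e6 : x - l = A - C := by rw [hA, hC]; ring
  have e7 : x + l + s = A + C := by rw [hA, hC]; ring
  rw [e5, e7, e4, e6, e3, e2, e1, ← sub_self B, th4_neg]
  calc _ = (th1 (A + B) τ * th1 (A - B) τ) * (th1 (B + C) τ * th1 (B - C) τ)
        + (th4 (A + B) τ * th4 (A - B) τ) * (th4 (B + C) τ * th4 (B - C) τ) := by ring
    _ = (th4 (B + B) τ * th4 (B - B) τ) * (th4 (A + C) τ * th4 (A - C) τ) := by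
      simp only [th1_mul_th1 _ _ hτ, th4_mul_th4 _ _ hτ]
      ring
    _ = _ := by ring

lemma one_sub_exp_sub_exp_neg_eq_zero {m n : ℤ} (h : ∀ l : ℤ, n ≠ 3 * l - 2 * m - 2) :
    1 - Complex.exp ((4 * m + 2 * n + 1) * Complex.I * ηc)
      - Complex.exp (-((4 * m + 2 * n + 1) * Complex.I * ηc)) = 0 := by
  have hpi : (Real.pi : ℂ) ≠ 0 := by exact_mod_cast Real.pi_ne_zero
  rw [Complex.exp_neg]
  set c := Complex.exp ((4 * m + 2 * n + 1) * Complex.I * ηc) with hc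
  have hc0 : c ≠ 0 := Complex.exp_ne_zero _
  have hcube : c ^ 3 = -1 := by
    rw [hc, ← Complex.exp_nat_mul,
      show ((3 : ℕ) : ℂ) * ((4 * m + 2 * n + 1) * Complex.I * ηc)
        = ((2 * m + n : ℤ) : ℂ) * (2 * Real.pi * Complex.I) + Real.pi * Complex.I by
          rw [ηc]; push_cast; ring,
      Complex.exp_add, Complex.exp_int_mul_two_pi_mul_I, Complex.exp_pi_mul_I, one_mul]
  have hne : c + 1 ≠ 0 := by
    intro h0
    have h1 : c = Complex.exp (Real.pi * Complex.I) := by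
      rw [Complex.exp_pi_mul_I]
      linear_combination h0
    obtain ⟨k, hk⟩ := Complex.exp_eq_exp_iff_exists_int.1 h1
    refine h (k + 1) ?_
    have h2 : (Real.pi * Complex.I : ℂ) * (4 * m + 2 * n + 1) = Real.pi * Complex.I * (3 + 6 * k) := by
      rw [ηc] at hk
      linear_combination 3 * hk
    have h3 : (4 * m + 2 * n + 1 : ℤ) = 3 + 6 * k := by
      exact_mod_cast mul_left_cancel₀ (mul_ne_zero hpi Complex.I_ne_zero) h2
    omega
  have hquad : c ^ 2 - c + 1 = 0 :=
    (mul_eq_zero.1 (show (c + 1) * (c ^ 2 - c + 1) = 0 by linear_combination hcube)).resolve_left hne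
  field_simp
  linear_combination -hquad

/-- Relation between theta constants at the cubic points. -/
lemma two_mul_th4_mul_th2_cubic {τ : ℂ} (hτ : 0 < τ.im) :
    2 * (th4 (2 * ηc) (2 * τ) * th2 ηc τ) = th4 0 (2 * τ) * th2 0 τ := by
  have hτ' : 0 < (2 * τ).im := by simpa using hτ
  let F : ℤ × ℤ → ℂ := fun p => (-1 : ℂ) ^ p.1 *
    Complex.exp ((Real.pi : ℂ) * Complex.I * τ * (2 * (p.1 : ℂ) ^ 2 + ((p.2 : ℂ) + 1/2) ^ 2))
  have hprod (z : ℂ) : HasSum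
      (fun p : ℤ × ℤ => F p * Complex.exp ((4 * p.1 + 2 * p.2 + 1) * Complex.I * z))
      (th4 (2 * z) (2 * τ) * th2 z τ) := by
    have h4 := (summable_int_gaussian (2 * z) hτ').neg_one_zpow_mul.norm
    have h2 := (summable_halfInt_gaussian z hτ).norm
    rw [th4, th2, tsum_mul_tsum_of_summable_norm h4 h2]
    refine (summable_mul_of_summable_norm h4 h2).hasSum.congr_fun (fun p => ?_)
    simp only [F]
    rw [mul_assoc ((-1 : ℂ) ^ p.1), mul_assoc ((-1 : ℂ) ^ p.1), ← Complex.exp_add, ← Complex.exp_add]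
    congr 2
    ring
  let H : ℤ × ℤ → ℂ := fun p => F p * (1 - Complex.exp ((4 * p.1 + 2 * p.2 + 1) * Complex.I * ηc)
      - Complex.exp (-((4 * p.1 + 2 * p.2 + 1) * Complex.I * ηc)))
  have hH : HasSum H (th4 0 (2 * τ) * th2 0 τ - th4 (2 * ηc) (2 * τ) * th2 ηc τ
      - th4 (2 * ηc) (2 * τ) * th2 ηc τ) := by
    have h0 := hprod 0
    have hneg := hprod (-ηc)
    rw [mul_zero] at h0
    rw [mul_neg, th4_neg, th2_neg] at hneg
    refine ((h0.sub (hprod ηc)).sub hneg).congr_fun (fun p => ?_)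
    simp only [H, mul_zero, Complex.exp_zero, mul_neg]
    ring
  let σ : ℤ × ℤ → ℤ × ℤ := fun p => (p.1, 3 * p.2 - 2 * p.1 - 2)
  have hσ : Function.Injective σ := by
    rintro ⟨m, l⟩ ⟨m', l'⟩ h
    simp only [σ, Prod.mk.injEq] at h ⊢
    omega
  have hsupp : Function.support H ⊆ Set.range σ := by
    rintro ⟨m, n⟩ hp
    by_contra hmem
    refine hp (mul_eq_zero_of_right _ (one_sub_exp_sub_exp_neg_eq_zero fun l hl => hmem ⟨(m, l), ?_⟩))
    exact Prod.ext rfl hl.symm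
  have hinv : Function.Involutive fun p : ℤ × ℤ => (2 * p.2 - p.1 - 1, p.2) := by
    rintro ⟨m, l⟩
    ext
    · simp only; ring
    · rfl
  have hanti (p : ℤ × ℤ) : H (σ (2 * p.2 - p.1 - 1, p.2)) = -H (σ p) := by
    obtain ⟨m, l⟩ := p
    simp only [H, F, σ]
    have hsign : (-1 : ℂ) ^ (2 * l - m - 1) = -(-1 : ℂ) ^ m := by
      rw [show 2 * l - m - 1 = (l + l - 1) - m by ring, neg_one_zpow_sub_eq_add,
        show l + l - 1 + m = l + l + m - 1 by ring, zpow_sub_one₀ (by norm_num),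
        zpow_add₀ (by norm_num), zpow_add₀ (by norm_num), neg_one_zpow_mul_self]
      norm_num
    rw [hsign, ← neg_mul, ← neg_mul]
    push_cast
    ring_nf
  have hzero : ∑' p, H (σ p) = 0 := by
    have h := (Equiv.tsum_eq hinv.toPerm fun p => H (σ p))
    simp only [Function.Involutive.coe_toPerm, hanti, tsum_neg] at h
    exact self_eq_neg.1 h.symm
  have htot := hσ.tsum_eq hsupp
  rw [hzero, hH.tsum_eq] at htot
  linear_combination htot

lemma rv_eq (u : ℂ) {τ : ℂ} (hτ : 0 < τ.im) :
    rv τ u = th4 0 (2 * τ) * th1 (2 * ηc - u) (2 * τ) * th4 (2 * ηc - u) (2 * τ) := by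
  have h1 := th1_mul_th2 (u + ηc) ηc hτ
  have h2 := th1_mul_th2 (2 * ηc - u) 0 hτ
  have h3 : th1 (2 * ηc - u) τ = th1 (u + ηc) τ := by
    rw [← th1_pi_sub]
    congr 1
    rw [ηc]
    ring
  rw [add_assoc, ← two_mul, add_sub_cancel_right] at h1
  rw [add_zero, sub_zero, h3] at h2
  rw [rv, av, bv]
  linear_combination -th4 (2 * ηc) (2 * τ) * h1 + th4 0 (2 * τ) / 2 * h2
    + th1 (u + ηc) τ / 2 * two_mul_th4_mul_th2_cubic hτ

theorem stmt8 (τ : ℂ) (hτ : 0 < τ.im) (lam x : ℂ)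
    (hg : th4 (2*(ηc - x)) (2*τ) ≠ 0) (hgb : th1 (2*(ηc - x)) (2*τ) ≠ 0) :
    (Matrix.of (Rcheckent τ (2*x))).mulVec (chiV τ lam x)
        = (th4 (2*(ηc + x)) (2*τ) / th4 (2*(ηc - x)) (2*τ) * rv τ (2*x)) • chiV τ lam (-x) ∧
    (Matrix.of (Rcheckent τ (2*x))).mulVec (chibarV τ lam x)
        = (th1 (2*(ηc + x)) (2*τ) / th1 (2*(ηc - x)) (2*τ) * rv τ (2*x)) • chibarV τ lam (-x) := by
  have hτ' : 0 < (2 * τ).im := by simpa using hτ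
  have hr := rv_eq (2 * x) hτ
  have e1 : 2 * (ηc - x) = 2 * ηc - 2 * x := by ring
  have e2 : 2 * (ηc + x) = 2 * x + 2 * ηc := by ring
  have f1 : th1 (-x + lam) (2 * τ) = -th1 (x - lam) (2 * τ) := by rw [← th1_neg]; ring_nf
  have f2 : th4 (-x + lam) (2 * τ) = th4 (x - lam) (2 * τ) := by rw [← th4_neg]; ring_nf
  have f3 : th1 (-x - lam - 2 * ηc) (2 * τ) = -th1 (x + lam + 2 * ηc) (2 * τ) := by
    rw [← th1_neg]; ring_nf
  have f4 : th4 (-x - lam - 2 * ηc) (2 * τ) = th4 (x + lam + 2 * ηc) (2 * τ) := by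
    rw [← th4_neg]; ring_nf
  have i1 := three_term_mixed x lam (2 * ηc) hτ'
  have i2 := three_term_mixed x (-lam - 2 * ηc) (2 * ηc) hτ'
  have i3 := three_term_th1 x lam (2 * ηc) hτ'
  have i4 := three_term_th4 x lam (2 * ηc) hτ'
  have s1 : x + (-lam - 2 * ηc) = x - lam - 2 * ηc := by ring
  have s2 : x - (-lam - 2 * ηc) - 2 * ηc = x + lam := by ring
  have s3 : x - (-lam - 2 * ηc) = x + lam + 2 * ηc := by ring
  have s4 : x - lam - 2 * ηc + 2 * ηc = x - lam := by ring
  rw [s2, s3, s1, s4] at i2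
  rw [e1] at hg hgb
  have c1 : th4 (2 * x + 2 * ηc) (2 * τ) / th4 (2 * ηc - 2 * x) (2 * τ) * rv τ (2 * x)
      = th4 (2 * x + 2 * ηc) (2 * τ) * (th4 0 (2 * τ) * th1 (2 * ηc - 2 * x) (2 * τ)) := by
    rw [hr, div_mul_eq_mul_div, div_eq_iff hg]
    ring
  have c2 : th1 (2 * x + 2 * ηc) (2 * τ) / th1 (2 * ηc - 2 * x) (2 * τ) * rv τ (2 * x)
      = th1 (2 * x + 2 * ηc) (2 * τ) * (th4 0 (2 * τ) * th4 (2 * ηc - 2 * x) (2 * τ)) := by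
    rw [hr, div_mul_eq_mul_div, div_eq_iff hgb]
    ring
  rw [e1, e2, c1, c2]
  constructor
  · funext ⟨i, j⟩
    fin_cases i <;> fin_cases j <;>
      simp [Matrix.mulVec, dotProduct, Fintype.sum_prod_type, Rcheckent, Rent, chiV, f1, f2, f3,
        f4, bv, cv]
    · linear_combination th4 (2 * x + 2 * ηc) (2 * τ) * i1
    · linear_combination th4 (2 * x + 2 * ηc) (2 * τ) * i2
  · funext ⟨i, j⟩
    fin_cases i <;> fin_cases j <;>
      simp [Matrix.mulVec, dotProduct, Fintype.sum_prod_type, Rcheckent, Rent, chibarV, f1, f2, f3,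
        f4, av, dv]
    · linear_combination th1 (2 * x + 2 * ηc) (2 * τ) * i3
    · linear_combination th1 (2 * x + 2 * ηc) (2 * τ) * i4

end
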